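/- Fix α > 1, a > 0 and d > 0, and set r₀ = |log ε|^α. There exist constants C > 0 and ε₀ ∈ (0,1) such that for every ε ∈ (0, ε₀), for every measurable ω : ℝ² → ℝ with ∫_{ℝ²}|ω(y)| dy ≤ a and support contained in {y ∈ ℝ² : |y₂| ≤ r₀/2}, and for every x ∈ ℝ² with |x₂| ≤ r₀/2 and dist(x, supp ω) ≥ d, one has |∫_{ℝ²} (G(x,y) − K(x−y)) ω(y) dy| ≤ C log|log ε| / |log ε|^α. -/

import Mathlib

open MeasureTheory Real
open scoped RealInnerProductSpace

/-- The plane `ℝ²` with the Euclidean norm. -/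
abbrev E2 := EuclideanSpace ℝ (Fin 2)

open Classical in
/-- The two-dimensional Biot–Savart kernel
`K(x) = (1/(2π)) (−x₂, x₁)/|x|²`, with `K(0) = 0`. -/
noncomputable def K (x : E2) : E2 :=
  if x = 0 then 0
  else (2 * Real.pi * ‖x‖ ^ 2)⁻¹ • (WithLp.equiv 2 (Fin 2 → ℝ)).symm ![-(x 1), x 0]

/-- First component of the kernel `G`. -/
noncomputable def G1 (r₀ : ℝ) (x y : E2) : ℝ :=
  (2 * Real.pi)⁻¹ * ∫ θ in (0:ℝ)..Real.pi,
    ((r₀ + y 1) * ((r₀ + y 1) - (r₀ + x 1) * Real.cos θ)) /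
      (‖x - y‖ ^ 2 + 2 * (r₀ + x 1) * (r₀ + y 1) * (1 - Real.cos θ)) ^ ((3:ℝ)/2)

/-- Second component of the kernel `G`. -/
noncomputable def G2 (r₀ : ℝ) (x y : E2) : ℝ :=
  (2 * Real.pi)⁻¹ * ∫ θ in (0:ℝ)..Real.pi,
    ((r₀ + y 1) * (x 0 - y 0) * Real.cos θ) /
      (‖x - y‖ ^ 2 + 2 * (r₀ + x 1) * (r₀ + y 1) * (1 - Real.cos θ)) ^ ((3:ℝ)/2)

/-- The kernel `G(x,y) = (G₁(x,y), G₂(x,y))` as a vector in `ℝ²`. -/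
noncomputable def Gvec (r₀ : ℝ) (x y : E2) : E2 :=
  (WithLp.equiv 2 (Fin 2 → ℝ)).symm ![G1 r₀ x y, G2 r₀ x y]

/-!
The estimate is pointwise in `y`. Put `A = r₀ + x₂`, `B = r₀ + y₂`, `z = x - y`, `ρ = |z|` and
`D(θ) = ρ² + 2AB(1 - cos θ) = ρ² + 4AB sin²(θ/2)`. The function
`2 sin(θ/2) / (ρ² √D(θ))` is an antiderivative of `cos(θ/2) / D(θ)^{3/2}`, so
`∫₀^π B cos(θ/2) / D^{3/2} dθ = (2B / √(ρ² + 4AB)) / ρ²`, and `2B / √(ρ² + 4AB)` differs from `1`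
by at most `ρ / √(ρ² + 4AB)`, because `ρ² + 4AB = (2B + z₂)² + z₁²`. Hence replacing the angular
factors in `G` by `cos(θ/2)` produces `K` up to an error `O(1/r₀)` (`integral_near`).

The replacement changes the integrands of `2πG₁`, `2πG₂` by `O(ρB sin²(θ/2) / D^{3/2}) = O(1/A)`,
apart from the term `2AB sin²(θ/2) / D^{3/2}` in the first one. This term is at most
`1 / (2√D) ≤ 1 / (d + r₀θ/π)`, and its integral gives the logarithm.
-/

/-! ### The denominator of the kernel -/

/-- The denominator `D = ρ² + 2AB(1 - cos θ)` of the kernel `G`. -/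
noncomputable def Dn (ρ A B θ : ℝ) : ℝ := ρ ^ 2 + 2 * A * B * (1 - Real.cos θ)

lemma Dn_eq (ρ A B θ : ℝ) : Dn ρ A B θ = ρ ^ 2 + 4 * A * B * Real.sin (θ / 2) ^ 2 := by
  have h : Real.cos θ = 1 - 2 * Real.sin (θ / 2) ^ 2 := by
    have h1 := Real.cos_two_mul (θ / 2)
    have h2 := Real.sin_sq_add_cos_sq (θ / 2)
    rw [show 2 * (θ / 2) = θ by ring] at h1
    linarith
  rw [Dn, h]; ring

lemma Dn_ge {ρ A B : ℝ} (hA : 0 < A) (hB : 0 < B) (θ : ℝ) : ρ ^ 2 ≤ Dn ρ A B θ := by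
  rw [Dn_eq]; nlinarith [mul_nonneg (mul_pos hA hB).le (sq_nonneg (Real.sin (θ / 2)))]

lemma Dn_pos {ρ A B : ℝ} (hρ : 0 < ρ) (hA : 0 < A) (hB : 0 < B) (θ : ℝ) : 0 < Dn ρ A B θ :=
  lt_of_lt_of_le (by positivity) (Dn_ge hA hB θ)

lemma rpow_three_halves {D : ℝ} (hD : 0 < D) : D ^ ((3:ℝ) / 2) = D * √D := by
  rw [show (3:ℝ) / 2 = 1 + 1 / 2 by norm_num, Real.rpow_add hD, Real.rpow_one, Real.sqrt_eq_rpow]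

lemma Dn_rpow_pos {ρ A B : ℝ} (hρ : 0 < ρ) (hA : 0 < A) (hB : 0 < B) (θ : ℝ) :
    0 < Dn ρ A B θ ^ ((3:ℝ) / 2) := Real.rpow_pos_of_pos (Dn_pos hρ hA hB θ) _

lemma Dn_rpow_continuous {ρ A B : ℝ} :
    Continuous fun θ => Dn ρ A B θ ^ ((3:ℝ) / 2) := by
  have h : Continuous fun θ => Dn ρ A B θ := by unfold Dn; fun_prop
  exact h.rpow_const fun _ => Or.inr (by norm_num)

/-! ### The planar main term -/

/-- `2 sin(θ/2) / (ρ² √D)` is an antiderivative of `cos(θ/2) / D^{3/2}`. -/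
lemma integral_cos_half {ρ A B : ℝ} (hρ : 0 < ρ) (hA : 0 < A) (hB : 0 < B) :
    ∫ θ in (0:ℝ)..Real.pi, Real.cos (θ / 2) / Dn ρ A B θ ^ ((3:ℝ) / 2)
      = 2 / (ρ ^ 2 * √(ρ ^ 2 + 4 * A * B)) := by
  have key : ∀ θ ∈ Set.uIcc (0:ℝ) Real.pi,
      HasDerivAt (fun θ => 2 * Real.sin (θ / 2) / (ρ ^ 2 * √(Dn ρ A B θ)))
        (Real.cos (θ / 2) / Dn ρ A B θ ^ ((3:ℝ) / 2)) θ := by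
    intro θ _
    have hD := Dn_pos hρ hA hB θ
    have hs : 0 < √(Dn ρ A B θ) := Real.sqrt_pos.2 hD
    have hhalf : HasDerivAt (fun θ : ℝ => θ / 2) (1 / 2) θ := (hasDerivAt_id θ).div_const 2
    have h1 := (hhalf.sin).const_mul 2
    have h2 : HasDerivAt (fun θ => Dn ρ A B θ)
        (4 * A * B * (2 * Real.sin (θ / 2) * (Real.cos (θ / 2) * (1 / 2)))) θ := by
      have h := ((hhalf.sin.pow 2).const_mul (4 * A * B)).const_add (ρ ^ 2)
      have e : (fun θ => Dn ρ A B θ) = fun θ => ρ ^ 2 + 4 * A * B * Real.sin (θ / 2) ^ 2 :=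
        funext fun θ => Dn_eq ρ A B θ
      rw [e]
      exact h.congr_deriv (by norm_num)
    have h3 := (h2.sqrt hD.ne').const_mul (ρ ^ 2)
    have h4 := h1.div h3 (by positivity)
    refine h4.congr_deriv ?_
    rw [rpow_three_halves hD]
    have hsq : √(Dn ρ A B θ) ^ 2 = Dn ρ A B θ := Real.sq_sqrt hD.le
    have hDe := Dn_eq ρ A B θ
    set s := √(Dn ρ A B θ)
    set S := Real.sin (θ / 2)
    set c := Real.cos (θ / 2)
    rw [← hsq] at hDe ⊢
    field_simp
    rw [hDe]
    ring
  rw [intervalIntegral.integral_eq_sub_of_hasDerivAt key]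
  · simp [Dn_eq]
  · apply Continuous.intervalIntegrable
    exact Continuous.div (by fun_prop) Dn_rpow_continuous fun θ => (Dn_rpow_pos hρ hA hB θ).ne'

/-- If `f` is within `g` of `w B cos(θ/2) / D^{3/2}`, where `w` is a component of `z`, then the
integral of `f` is within `1/r + ∫ g` of the planar value `w / ρ²`. The hypothesis `hz` says that
`z` has components `u` and `A - B`. -/
lemma integral_near {ρ A B r u w : ℝ} (hρ : 0 < ρ) (hr : 0 < r) (hA : r / 2 ≤ A) (hB : r / 2 ≤ B)
    (hz : ρ ^ 2 = u ^ 2 + (A - B) ^ 2) (hw : |w| ≤ ρ) {f g : ℝ → ℝ} (hf : Continuous f)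
    (hg : IntervalIntegrable g volume 0 Real.pi)
    (hfg : ∀ θ ∈ Set.Icc (0:ℝ) Real.pi,
      |f θ - w * B * (Real.cos (θ / 2) / Dn ρ A B θ ^ ((3:ℝ) / 2))| ≤ g θ) :
    |(∫ θ in (0:ℝ)..Real.pi, f θ) - w / ρ ^ 2| ≤ 1 / r + ∫ θ in (0:ℝ)..Real.pi, g θ := by
  have hA0 : 0 < A := by linarith
  have hB0 : 0 < B := by linarith
  have hcont : Continuous fun θ => w * B * (Real.cos (θ / 2) / Dn ρ A B θ ^ ((3:ℝ) / 2)) :=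
    continuous_const.mul
      (Continuous.div (by fun_prop) Dn_rpow_continuous fun θ => (Dn_rpow_pos hρ hA0 hB0 θ).ne')
  have h1 : |(∫ θ in (0:ℝ)..Real.pi, f θ)
      - w * B * (2 / (ρ ^ 2 * √(ρ ^ 2 + 4 * A * B)))| ≤ ∫ θ in (0:ℝ)..Real.pi, g θ := by
    rw [← integral_cos_half hρ hA0 hB0, ← intervalIntegral.integral_const_mul,
      ← intervalIntegral.integral_sub (hf.intervalIntegrable _ _) (hcont.intervalIntegrable _ _)]
    refine (intervalIntegral.abs_integral_le_integral_abs Real.pi_pos.le).trans ?_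
    exact intervalIntegral.integral_mono_on Real.pi_pos.le
      ((hf.sub hcont).abs.intervalIntegrable _ _) hg hfg
  have h2 : |w * B * (2 / (ρ ^ 2 * √(ρ ^ 2 + 4 * A * B))) - w / ρ ^ 2| ≤ 1 / r := by
    have hAB : r ^ 2 ≤ 4 * A * B := by nlinarith
    have hQ0 : 0 ≤ ρ ^ 2 + 4 * A * B := by positivity
    set Q := √(ρ ^ 2 + 4 * A * B) with hQ
    have hQsq : Q ^ 2 = ρ ^ 2 + 4 * A * B := Real.sq_sqrt hQ0
    have hrQ : r ≤ Q := Real.le_sqrt_of_sq_le (by nlinarith [sq_nonneg ρ])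
    have hQpos : 0 < Q := hr.trans_le hrQ
    -- The reverse triangle inequality between `(2B, 0)` and `(2B + (A - B), u)`.
    have hd : |2 * B - Q| ≤ ρ := by
      have hub : A + B ≤ Q := Real.le_sqrt_of_sq_le (by nlinarith [sq_nonneg u])
      apply abs_le_of_sq_le_sq _ hρ.le
      nlinarith
    have e : w * B * (2 / (ρ ^ 2 * Q)) - w / ρ ^ 2 = w * (2 * B - Q) / (ρ ^ 2 * Q) := by
      field_simp
    rw [e, abs_div, abs_mul, abs_of_pos (show 0 < ρ ^ 2 * Q by positivity)]
    calc |w| * |2 * B - Q| / (ρ ^ 2 * Q) ≤ ρ * ρ / (ρ ^ 2 * Q) := by gcongr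
      _ = 1 / Q := by field_simp
      _ ≤ 1 / r := by gcongr
  calc _ ≤ _ := abs_sub_le _ (w * B * (2 / (ρ ^ 2 * √(ρ ^ 2 + 4 * A * B)))) _
    _ ≤ _ := by linarith

/-! ### Bounds on the remainders -/

lemma sin_sq_div_le {ρ A B : ℝ} (hρ : 0 < ρ) (hA : 0 < A) (hB : 0 < B) (θ : ℝ) :
    ρ * B * (Real.sin (θ / 2) ^ 2 / Dn ρ A B θ ^ ((3:ℝ) / 2)) ≤ 1 / (4 * A) := by
  have hD := Dn_pos hρ hA hB θ
  have hs : ρ ≤ √(Dn ρ A B θ) := Real.le_sqrt_of_sq_le (Dn_ge hA hB θ)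
  have hS : 4 * A * B * Real.sin (θ / 2) ^ 2 ≤ Dn ρ A B θ := by
    rw [Dn_eq]; nlinarith [sq_nonneg ρ]
  rw [rpow_three_halves hD, ← mul_div_assoc, div_le_div_iff₀ (by positivity) (by positivity)]
  calc ρ * B * Real.sin (θ / 2) ^ 2 * (4 * A) = (4 * A * B * Real.sin (θ / 2) ^ 2) * ρ := by ring
    _ ≤ Dn ρ A B θ * √(Dn ρ A B θ) := by gcongr
    _ = 1 * (Dn ρ A B θ * √(Dn ρ A B θ)) := by ring

lemma log_term_le {ρ A B r d θ : ℝ} (hr : 0 < r) (hd : 0 < d) (hdρ : d ≤ ρ)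
    (hA : r / 2 ≤ A) (hB : r / 2 ≤ B) (hθ : θ ∈ Set.Icc (0:ℝ) Real.pi) :
    2 * A * B * Real.sin (θ / 2) ^ 2 / Dn ρ A B θ ^ ((3:ℝ) / 2) ≤ (d + r / Real.pi * θ)⁻¹ := by
  have hA0 : 0 < A := by linarith
  have hB0 : 0 < B := by linarith
  have hρ : 0 < ρ := by linarith
  have hD := Dn_pos hρ hA0 hB0 θ
  have hθ0 := hθ.1
  have hs : 0 < √(Dn ρ A B θ) := Real.sqrt_pos.2 hD
  have hS : 4 * A * B * Real.sin (θ / 2) ^ 2 ≤ Dn ρ A B θ := by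
    rw [Dn_eq]; nlinarith [sq_nonneg ρ]
  have hAB : r ^ 2 ≤ 4 * A * B := by nlinarith
  have hj : θ / Real.pi ≤ Real.sin (θ / 2) := by
    have := Real.mul_le_sin (x := θ / 2) (by linarith) (by linarith [hθ.2])
    calc θ / Real.pi = 2 / Real.pi * (θ / 2) := by ring
      _ ≤ _ := this
  have hDl : d ^ 2 + (r / Real.pi * θ) ^ 2 ≤ Dn ρ A B θ := by
    rw [Dn_eq]
    have h1 : d ^ 2 ≤ ρ ^ 2 := by gcongr
    have h2 : (r / Real.pi * θ) ^ 2 ≤ 4 * A * B * Real.sin (θ / 2) ^ 2 := by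
      calc (r / Real.pi * θ) ^ 2 = r ^ 2 * (θ / Real.pi) ^ 2 := by ring
        _ ≤ _ := by gcongr
    linarith
  have hq : d + r / Real.pi * θ ≤ 2 * √(Dn ρ A B θ) := by
    have hsq := Real.sq_sqrt hD.le
    apply le_of_sq_le_sq _ (by positivity)
    nlinarith [sq_nonneg (d - r / Real.pi * θ)]
  have hpos : 0 < d + r / Real.pi * θ := by positivity
  calc 2 * A * B * Real.sin (θ / 2) ^ 2 / Dn ρ A B θ ^ ((3:ℝ) / 2)
      ≤ (Dn ρ A B θ / 2) / (Dn ρ A B θ * √(Dn ρ A B θ)) := by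
        rw [rpow_three_halves hD]; gcongr; linarith
    _ = (2 * √(Dn ρ A B θ))⁻¹ := by field_simp
    _ ≤ _ := by gcongr

lemma integral_inv_lin {r d : ℝ} (hr : 0 < r) (hd : 0 < d) :
    ∫ θ in (0:ℝ)..Real.pi, (d + r / Real.pi * θ)⁻¹ = Real.pi / r * Real.log (1 + r / d) := by
  have hc : r / Real.pi ≠ 0 := (div_pos hr Real.pi_pos).ne'
  rw [intervalIntegral.integral_comp_add_mul (fun t => t⁻¹) hc]
  rw [integral_inv_of_pos (by simpa using hd) (by have := Real.pi_pos; positivity)]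
  have hpi := Real.pi_ne_zero
  rw [smul_eq_mul, inv_div]
  congr 2
  field_simp
  simp

/-- The angular factors of `G` differ from `cos(θ/2)` by `O(sin²(θ/2))`. -/
lemma cos_half_bounds {θ : ℝ} (hθ : θ ∈ Set.Icc (0:ℝ) Real.pi) :
    |1 - Real.cos (θ / 2)| ≤ Real.sin (θ / 2) ^ 2 ∧
    |Real.cos θ - Real.cos (θ / 2)| ≤ 2 * Real.sin (θ / 2) ^ 2 ∧
    Real.cos θ = 1 - 2 * Real.sin (θ / 2) ^ 2 := by
  have h1 := Real.cos_two_mul (θ / 2)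
  have h2 := Real.sin_sq_add_cos_sq (θ / 2)
  rw [show 2 * (θ / 2) = θ by ring] at h1
  have h3 := Real.cos_le_one (θ / 2)
  have h4 : 0 ≤ Real.cos (θ / 2) :=
    Real.cos_nonneg_of_mem_Icc ⟨by linarith [hθ.1, Real.pi_pos], by linarith [hθ.2]⟩
  refine ⟨?_, ?_, by linarith⟩
  · rw [abs_le]; constructor <;> nlinarith
  · rw [abs_le]; constructor <;> nlinarith

/-! ### Comparison of the kernels -/

/-- Comparison of `2πG₁` with `2πK₁`; the term `2AB sin²(θ/2) / D^{3/2}` gives the logarithm. -/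
lemma integral_G1 {ρ A B r d u : ℝ} (hr : 0 < r) (hd : 0 < d) (hdρ : d ≤ ρ)
    (hA : r / 2 ≤ A) (hB : r / 2 ≤ B) (hz : ρ ^ 2 = u ^ 2 + (A - B) ^ 2) :
    |(∫ θ in (0:ℝ)..Real.pi, B * (B - A * Real.cos θ) / Dn ρ A B θ ^ ((3:ℝ) / 2))
      - (-(A - B)) / ρ ^ 2| ≤
      1 / r + (Real.pi / (2 * r) + Real.pi / r * Real.log (1 + r / d)) := by
  have hA0 : 0 < A := by linarith
  have hB0 : 0 < B := by linarith
  have hρ : 0 < ρ := by linarith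
  have hw : |(-(A - B))| ≤ ρ := abs_le_of_sq_le_sq (by nlinarith [sq_nonneg u]) hρ.le
  have hI : IntervalIntegrable (fun θ => (d + r / Real.pi * θ)⁻¹) volume 0 Real.pi := by
    apply ContinuousOn.intervalIntegrable
    apply ContinuousOn.inv₀ (by fun_prop)
    intro θ hθ
    rw [Set.uIcc_of_le Real.pi_pos.le] at hθ
    have := hθ.1
    have := Real.pi_pos
    positivity
  have hc : IntervalIntegrable (fun _ : ℝ => 1 / (4 * A)) volume 0 Real.pi := by simp
  refine (integral_near (g := fun θ => 1 / (4 * A) + (d + r / Real.pi * θ)⁻¹)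
    hρ hr hA hB hz hw ?_ (hc.add hI) ?_).trans ?_
  · exact Continuous.div (by fun_prop) Dn_rpow_continuous fun θ => (Dn_rpow_pos hρ hA0 hB0 θ).ne'
  · intro θ hθ
    obtain ⟨b1, -, b3⟩ := cos_half_bounds hθ
    have hP := Dn_rpow_pos hρ hA0 hB0 θ
    have t1 := sin_sq_div_le hρ hA0 hB0 θ
    have t2 := log_term_le hr hd hdρ hA hB hθ
    set P := Dn ρ A B θ ^ ((3:ℝ) / 2)
    have e : B * (B - A * Real.cos θ) / P - -(A - B) * B * (Real.cos (θ / 2) / P)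
        = -(A - B) * (1 - Real.cos (θ / 2)) * B / P
          + 2 * A * B * Real.sin (θ / 2) ^ 2 / P := by
      rw [b3]; field_simp; ring
    rw [e]
    refine (abs_add_le _ _).trans (add_le_add ?_ ?_)
    · rw [abs_div, abs_mul, abs_mul, abs_of_pos hP, abs_of_pos hB0]
      calc _ ≤ ρ * Real.sin (θ / 2) ^ 2 * B / P := by gcongr
        _ = ρ * B * (Real.sin (θ / 2) ^ 2 / P) := by ring
        _ ≤ _ := t1
    · rwa [abs_of_nonneg (by positivity)]
  · rw [intervalIntegral.integral_add hc hI, integral_inv_lin hr hd]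
    have : (∫ _ in (0:ℝ)..Real.pi, 1 / (4 * A)) ≤ Real.pi / (2 * r) := by
      rw [intervalIntegral.integral_const, smul_eq_mul, sub_zero, mul_one_div]
      exact div_le_div_of_nonneg_left Real.pi_pos.le (by positivity) (by linarith)
    linarith

/-- Comparison of `2πG₂` with `2πK₂`; there is no logarithmic term here. -/
lemma integral_G2 {ρ A B r u : ℝ} (hr : 0 < r) (hρ : 0 < ρ)
    (hA : r / 2 ≤ A) (hB : r / 2 ≤ B) (hz : ρ ^ 2 = u ^ 2 + (A - B) ^ 2) :
    |(∫ θ in (0:ℝ)..Real.pi, B * u * Real.cos θ / Dn ρ A B θ ^ ((3:ℝ) / 2))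
      - u / ρ ^ 2| ≤ 1 / r + Real.pi / r := by
  have hA0 : 0 < A := by linarith
  have hB0 : 0 < B := by linarith
  have hw : |u| ≤ ρ := abs_le_of_sq_le_sq (by nlinarith [sq_nonneg (A - B)]) hρ.le
  have hc : IntervalIntegrable (fun _ : ℝ => 1 / (2 * A)) volume 0 Real.pi := by simp
  refine (integral_near (g := fun _ => 1 / (2 * A)) hρ hr hA hB hz hw ?_ hc ?_).trans ?_
  · exact Continuous.div (by fun_prop) Dn_rpow_continuous fun θ => (Dn_rpow_pos hρ hA0 hB0 θ).ne'
  · intro θ hθ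
    obtain ⟨-, b2, -⟩ := cos_half_bounds hθ
    have hP := Dn_rpow_pos hρ hA0 hB0 θ
    have t1 := sin_sq_div_le hρ hA0 hB0 θ
    set P := Dn ρ A B θ ^ ((3:ℝ) / 2)
    have e : B * u * Real.cos θ / P - u * B * (Real.cos (θ / 2) / P)
        = u * (Real.cos θ - Real.cos (θ / 2)) * B / P := by ring
    rw [e, abs_div, abs_mul, abs_mul, abs_of_pos hP, abs_of_pos hB0]
    calc _ ≤ ρ * (2 * Real.sin (θ / 2) ^ 2) * B / P := by gcongr
      _ = 2 * (ρ * B * (Real.sin (θ / 2) ^ 2 / P)) := by ring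
      _ ≤ 2 * (1 / (4 * A)) := by gcongr
      _ = 1 / (2 * A) := by field_simp; norm_num
  · rw [intervalIntegral.integral_const, smul_eq_mul, sub_zero, mul_one_div]
    have := Real.pi_pos
    gcongr
    linarith

lemma norm_le_abs_add_abs (v : E2) : ‖v‖ ≤ |v 0| + |v 1| := by
  rw [EuclideanSpace.norm_eq, Fin.sum_univ_two]
  apply Real.sqrt_le_iff.2
  refine ⟨by positivity, ?_⟩
  simp only [Real.norm_eq_abs]
  nlinarith [mul_nonneg (abs_nonneg (v 0)) (abs_nonneg (v 1))]

/-- The pointwise comparison of `G` with the Biot–Savart kernel. The factor `1/(2π)` of both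
kernels is bounded by `1`. -/
lemma kernel_bound {r d : ℝ} (hr : 0 < r) (hd : 0 < d) (x y : E2) (hx : |x 1| ≤ r / 2)
    (hy : |y 1| ≤ r / 2) (hxy : d ≤ ‖x - y‖) :
    ‖Gvec r x y - K (x - y)‖ ≤ (2 + 2 * Real.pi + Real.pi * Real.log (1 + r / d)) / r := by
  have hA : r / 2 ≤ r + x 1 := by linarith [(abs_le.1 hx).1]
  have hB : r / 2 ≤ r + y 1 := by linarith [(abs_le.1 hy).1]
  have hρ : 0 < ‖x - y‖ := hd.trans_le hxy
  have hne : x - y ≠ 0 := norm_pos_iff.1 hρ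
  have hz : ‖x - y‖ ^ 2 = (x 0 - y 0) ^ 2 + ((r + x 1) - (r + y 1)) ^ 2 := by
    rw [EuclideanSpace.norm_sq_eq, Fin.sum_univ_two]
    simp
  have h1 := integral_G1 hr hd hxy hA hB hz
  have h2 := integral_G2 hr hρ hA hB hz
  have hlog : 0 ≤ Real.log (1 + r / d) := Real.log_nonneg (by linarith [div_pos hr hd])
  have e0 : (Gvec r x y - K (x - y)) 0 = (2 * Real.pi)⁻¹ *
      ((∫ θ in (0:ℝ)..Real.pi, (r + y 1) * ((r + y 1) - (r + x 1) * Real.cos θ) /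
        Dn ‖x - y‖ (r + x 1) (r + y 1) θ ^ ((3:ℝ) / 2))
        - (-((r + x 1) - (r + y 1))) / ‖x - y‖ ^ 2) := by
    simp only [Gvec, K, G1, Dn, if_neg hne]
    simp
    field_simp
  have e1 : (Gvec r x y - K (x - y)) 1 = (2 * Real.pi)⁻¹ *
      ((∫ θ in (0:ℝ)..Real.pi, (r + y 1) * (x 0 - y 0) * Real.cos θ /
        Dn ‖x - y‖ (r + x 1) (r + y 1) θ ^ ((3:ℝ) / 2))
        - (x 0 - y 0) / ‖x - y‖ ^ 2) := by
    simp only [Gvec, K, G2, Dn, if_neg hne]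
    simp
    field_simp
  have hpi := Real.pi_gt_three
  have hc : (2 * Real.pi)⁻¹ ≤ 1 := inv_le_one_of_one_le₀ (by linarith)
  have hc0 : 0 < (2 * Real.pi)⁻¹ := by positivity
  refine (norm_le_abs_add_abs _).trans ?_
  rw [e0, e1, abs_mul, abs_mul, abs_of_pos hc0, ← mul_add]
  refine (mul_le_of_le_one_left (by positivity) hc).trans ((add_le_add h1 h2).trans ?_)
  have hp : 0 ≤ Real.pi / (2 * r) := by positivity
  have e : (2 + 2 * Real.pi + Real.pi * Real.log (1 + r / d)) / r
      = 1 / r + (Real.pi / (2 * r) + Real.pi / r * Real.log (1 + r / d)) + (1 / r + Real.pi / r)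
        + Real.pi / (2 * r) := by
    field_simp; ring
  linarith

/-! ### Integration against the vorticity -/

/-- The part of the velocity field generated through `G` by distant vortex rings
differs from the planar Biot–Savart field by `C log|log ε|/|log ε|^α`. -/
theorem stmt6 (α a d : ℝ) (hα : 1 < α) (ha : 0 < a) (hd : 0 < d) :
    ∃ C > (0:ℝ), ∃ ε₀ ∈ Set.Ioo (0:ℝ) 1, ∀ ε : ℝ, ε ∈ Set.Ioo 0 ε₀ →
      ∀ ω : E2 → ℝ, Measurable ω → Integrable ω → (∫ y, |ω y|) ≤ a →
        Function.support ω ⊆ {y : E2 | |y 1| ≤ |Real.log ε| ^ α / 2} →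
        ∀ x : E2, |x 1| ≤ |Real.log ε| ^ α / 2 →
          d ≤ Metric.infDist x (Function.support ω) →
          ‖∫ y, ω y • (Gvec (|Real.log ε| ^ α) x y - K (x - y))‖ ≤
            C * Real.log |Real.log ε| / |Real.log ε| ^ α := by
  have hpi := Real.pi_pos
  have hd' : 0 ≤ Real.log (1 + 1 / d) := Real.log_nonneg (by linarith [div_pos one_pos hd])
  refine ⟨a * (2 + 2 * Real.pi + Real.pi * (α + Real.log (1 + 1 / d))), by positivity,
    Real.exp (-Real.exp 1), ⟨Real.exp_pos _, by simpa using Real.exp_pos 1⟩, ?_⟩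
  intro ε hε ω _ hint hmass hsupp x hx hdist
  -- The choice of `ε₀` gives `|log ε| ≥ e`, hence `log |log ε| ≥ 1`.
  have hL : Real.exp 1 ≤ |Real.log ε| := by
    have : Real.log ε < -Real.exp 1 := (Real.log_lt_iff_lt_exp hε.1).2 hε.2
    rw [abs_of_neg (by linarith [Real.exp_pos 1])]
    linarith
  set L := |Real.log ε|
  have hL0 : 0 < L := (Real.exp_pos 1).trans_le hL
  have hL1 : 1 ≤ L := (Real.one_le_exp zero_le_one).trans hL
  have hlogL : 1 ≤ Real.log L := (Real.le_log_iff_exp_le hL0).2 hL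
  set r := L ^ α with hr_def
  have hr : 0 < r := Real.rpow_pos_of_pos hL0 _
  have hr1 : 1 ≤ r := Real.one_le_rpow hL1 (by linarith)
  have hlog : Real.log (1 + r / d) ≤ (α + Real.log (1 + 1 / d)) * Real.log L := by
    have hdpos : 0 < 1 + 1 / d := by positivity
    calc Real.log (1 + r / d) ≤ Real.log (r * (1 + 1 / d)) := by
          apply Real.log_le_log (by positivity)
          have : r * (1 + 1 / d) = r + r / d := by ring
          linarith
      _ = α * Real.log L + Real.log (1 + 1 / d) := by
          rw [Real.log_mul hr.ne' hdpos.ne', hr_def, Real.log_rpow hL0]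
      _ ≤ _ := by nlinarith
  set M := (2 + 2 * Real.pi + Real.pi * Real.log (1 + r / d)) / r with hM
  have hM0 : 0 ≤ M := by
    have : 0 ≤ Real.log (1 + r / d) := Real.log_nonneg (by linarith [div_pos hr hd])
    positivity
  have hpt : ∀ y, ‖ω y • (Gvec r x y - K (x - y))‖ ≤ |ω y| * M := by
    intro y
    rw [norm_smul, Real.norm_eq_abs]
    by_cases hy : ω y = 0
    · simp [hy]
    · have hmem : y ∈ Function.support ω := hy
      gcongr
      refine kernel_bound hr hd x y hx (hsupp hmem) ?_
      rw [← dist_eq_norm]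
      exact hdist.trans (Metric.infDist_le_dist_of_mem hmem)
  calc ‖∫ y, ω y • (Gvec r x y - K (x - y))‖
      ≤ ∫ y, |ω y| * M :=
        norm_integral_le_of_norm_le (hint.abs.mul_const M) (Filter.Eventually.of_forall hpt)
    _ = (∫ y, |ω y|) * M := integral_mul_const _ _
    _ ≤ a * M := by gcongr
    _ ≤ a * ((2 + 2 * Real.pi + Real.pi * (α + Real.log (1 + 1 / d))) * Real.log L / r) := by
        rw [hM]
        gcongr
        nlinarith [mul_le_mul_of_nonneg_left hlog hpi.le]
    _ = _ := by ring
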